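/- arXiv:2605.08661 — 9 statements merged into one kernel-verified Lean document; each statement's English description precedes it below -/
import Mathlib

section
/- Let n be a positive integer and let A, B, C, D be n×n matrices with entries in {-1, 1} such that AAᵀ + BBᵀ + CCᵀ + DDᵀ = 4n·I and such that XYᵀ = YXᵀ for all X, Y ∈ {A, B, C, D}. Then the 4n×4n block matrix W = [[A, B, C, D], [-B, A, D, -C], [-C, -D, A, B], [-D, C, -B, A]] satisfies WWᵀ = 4n·I, i.e., W is a Hadamard matrix of order 4n. -/
open Matrix

/-- If four `n × n` `(-1,1)`-matrices `A, B, C, D` satisfy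
`AAᵀ + BBᵀ + CCᵀ + DDᵀ = 4n·I` and `XYᵀ = YXᵀ` for all `X, Y ∈ {A, B, C, D}`,
then the Williamson array `W` is a Hadamard matrix of order `4n`. -/
theorem williamson_array_hadamard (n : ℕ) (hn : 0 < n)
    (A B C D : Matrix (Fin n) (Fin n) ℝ)
    (hpm : ∀ X ∈ ({A, B, C, D} : Set (Matrix (Fin n) (Fin n) ℝ)),
      ∀ i j, X i j = 1 ∨ X i j = -1)
    (hadd : A * Aᵀ + B * Bᵀ + C * Cᵀ + D * Dᵀ = (4 * n : ℝ) • 1)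
    (hami : ∀ X ∈ ({A, B, C, D} : Set (Matrix (Fin n) (Fin n) ℝ)),
      ∀ Y ∈ ({A, B, C, D} : Set (Matrix (Fin n) (Fin n) ℝ)), X * Yᵀ = Y * Xᵀ) :
    let W := Matrix.fromBlocks
      (Matrix.fromBlocks A B (-B) A) (Matrix.fromBlocks C D D (-C))
      (Matrix.fromBlocks (-C) (-D) (-D) C) (Matrix.fromBlocks A B (-B) A)
    (∀ i j, W i j = 1 ∨ W i j = -1) ∧ W * Wᵀ = (4 * n : ℝ) • 1 := by
  intro W
  have hA := hpm A (by simp)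
  have hB := hpm B (by simp)
  have hC := hpm C (by simp)
  have hD := hpm D (by simp)
  have hBA := hami B (by simp) A (by simp)
  have hCA := hami C (by simp) A (by simp)
  have hDA := hami D (by simp) A (by simp)
  have hCB := hami C (by simp) B (by simp)
  have hDB := hami D (by simp) B (by simp)
  have hDC := hami D (by simp) C (by simp)
  have neg : ∀ x : ℝ, (x = 1 ∨ x = -1) → (-x = 1 ∨ -x = -1) := by
    rintro x (h | h) <;> simp [h]
  constructor
  · rintro ((i | i) | (i | i)) ((j | j) | (j | j)) <;>
      simp only [W, Matrix.fromBlocks_apply₁₁, Matrix.fromBlocks_apply₁₂,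
        Matrix.fromBlocks_apply₂₁, Matrix.fromBlocks_apply₂₂, Matrix.neg_apply] <;>
      first
        | exact hA i j
        | exact hB i j
        | exact hC i j
        | exact hD i j
        | exact neg _ (hB i j)
        | exact neg _ (hC i j)
        | exact neg _ (hD i j)
  · have key : ((4 * n : ℝ) • 1 : Matrix ((Fin n ⊕ Fin n) ⊕ (Fin n ⊕ Fin n))
        ((Fin n ⊕ Fin n) ⊕ (Fin n ⊕ Fin n)) ℝ) =
        Matrix.fromBlocks
          (Matrix.fromBlocks ((4 * n : ℝ) • (1 : Matrix (Fin n) (Fin n) ℝ)) 0 0 ((4 * n : ℝ) • (1 : Matrix (Fin n) (Fin n) ℝ))) (Matrix.fromBlocks 0 0 0 0)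
          (Matrix.fromBlocks 0 0 0 0)
          (Matrix.fromBlocks ((4 * n : ℝ) • (1 : Matrix (Fin n) (Fin n) ℝ)) 0 0 ((4 * n : ℝ) • (1 : Matrix (Fin n) (Fin n) ℝ))) := by
      rw [← Matrix.fromBlocks_one, ← Matrix.fromBlocks_one, Matrix.fromBlocks_smul,
        Matrix.fromBlocks_smul]
      simp
    rw [key, ← hadd]
    simp only [W, Matrix.fromBlocks_transpose, Matrix.fromBlocks_multiply,
      Matrix.fromBlocks_add, Matrix.transpose_neg, Matrix.neg_mul, Matrix.mul_neg, neg_neg,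
      hBA, hCA, hDA, hCB, hDB, hDC]
    congr 2 <;> abel
end

section
/- Let n be a positive integer, let A be an n×n symmetric circulant matrix and let B be an n×n back circulant matrix (over a commutative ring). Then AB = BA. -/
open Matrix

/-- `X` is circulant: `x_{ij} = x_{0, j-i}` with indices mod `n`. -/
def IsCirculant {n : ℕ} {α : Type*} (X : Matrix (ZMod n) (ZMod n) α) : Prop :=
  ∀ i j, X i j = X 0 (j - i)

/-- `X` is back circulant: `x_{ij} = x_{0, i+j}` with indices mod `n`. -/
def IsBackCirculant {n : ℕ} {α : Type*} (X : Matrix (ZMod n) (ZMod n) α) : Prop :=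
  ∀ i j, X i j = X 0 (i + j)

/-- A symmetric circulant matrix commutes with every back circulant
matrix (over a commutative ring). -/
theorem symm_circulant_commutes_backCirculant (n : ℕ) [NeZero n] {α : Type*} [CommRing α]
    (A B : Matrix (ZMod n) (ZMod n) α)
    (hA : IsCirculant A) (hAsymm : A.IsSymm) (hB : IsBackCirculant B) :
    A * B = B * A := by
  ext i j
  rw [Matrix.mul_apply, Matrix.mul_apply]
  refine Fintype.sum_equiv (Equiv.addRight (j - i)) _ _ fun k => ?_
  have e1 : A i k = A (k + (j - i)) j := by
    rw [← hAsymm.apply i k, hA k i, hA (k + (j - i)) j]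
    congr 1
    ring
  have e2 : B k j = B i (k + (j - i)) := by
    rw [hB k j, hB i (k + (j - i))]
    congr 1
    ring
  rw [Equiv.coe_addRight, e1, e2, mul_comm]
end

section
/- Let A, B, C, D be near Williamson matrices of order n, and let R denote the n×n back circulant (0,1)-matrix whose first row is (0, …, 0, 1). Then the four (-1,1)-matrices AR, B, C, D satisfy XYᵀ = YXᵀ for all X, Y ∈ {AR, B, C, D}, and (AR)(AR)ᵀ + BBᵀ + CCᵀ + DDᵀ = 4n·I. -/
open Matrix

/-- `X` is a `(-1,1)`-matrix. -/
def IsPM1 {n : ℕ} (X : Matrix (ZMod n) (ZMod n) ℝ) : Prop :=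
  ∀ i j, X i j = 1 ∨ X i j = -1

/-- `A, B, C, D` are near Williamson matrices of order `n`: four `(-1,1)`-matrices,
all circulant, with `B, C, D` symmetric, satisfying `AAᵀ + BBᵀ + CCᵀ + DDᵀ = 4n·I`. -/
def IsNearWilliamson (n : ℕ) [NeZero n] (A B C D : Matrix (ZMod n) (ZMod n) ℝ) : Prop :=
  IsPM1 A ∧ IsPM1 B ∧ IsPM1 C ∧ IsPM1 D ∧
  IsCirculant A ∧ IsCirculant B ∧ IsCirculant C ∧ IsCirculant D ∧
  B.IsSymm ∧ C.IsSymm ∧ D.IsSymm ∧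
  A * Aᵀ + B * Bᵀ + C * Cᵀ + D * Dᵀ = (4 * n : ℝ) • 1

/-- The back circulant `(0,1)`-matrix `R` whose first row is `(0, …, 0, 1)`. -/
def Rmat (n : ℕ) : Matrix (ZMod n) (ZMod n) ℝ :=
  Matrix.of fun i j => if i + j = -1 then 1 else 0

theorem mul_Rmat_apply {n : ℕ} [NeZero n] (A : Matrix (ZMod n) (ZMod n) ℝ) (i j : ZMod n) :
    (A * Rmat n) i j = A i (-1 - j) := by
  simp only [Matrix.mul_apply, Rmat, Matrix.of_apply, ← eq_sub_iff_add_eq]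
  simp

theorem circ_comm {n : ℕ} [NeZero n] {X Y : Matrix (ZMod n) (ZMod n) ℝ}
    (hX : IsCirculant X) (hY : IsCirculant Y) : X * Y = Y * X := by
  ext i j
  simp only [Matrix.mul_apply]
  refine Fintype.sum_equiv (Equiv.subLeft (i + j)) _ _ fun k => ?_
  simp only [Equiv.subLeft_apply]
  rw [hX i k, hY k j, hY i, hX _ j, mul_comm]
  congr 2 <;> ring

theorem AR_symm {n : ℕ} [NeZero n] {A : Matrix (ZMod n) (ZMod n) ℝ}
    (hA : IsCirculant A) : (A * Rmat n)ᵀ = A * Rmat n := by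
  ext i j
  rw [Matrix.transpose_apply, mul_Rmat_apply, mul_Rmat_apply, hA, hA i]
  congr 1; ring

theorem AR_comm {n : ℕ} [NeZero n] {A S : Matrix (ZMod n) (ZMod n) ℝ}
    (hA : IsCirculant A) (hS : IsCirculant S) (hs : S.IsSymm) :
    (A * Rmat n) * S = S * (A * Rmat n) := by
  ext i j
  rw [Matrix.mul_apply, Matrix.mul_apply]
  refine Fintype.sum_equiv (Equiv.addRight (i - j)) _ _ fun k => ?_
  simp only [Equiv.coe_addRight]
  rw [mul_Rmat_apply, mul_Rmat_apply, ← hs.apply k j, hA, hS j, hS i, hA (k + _), mul_comm]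
  congr 2 <;> ring

theorem AR_sq {n : ℕ} [NeZero n] {A : Matrix (ZMod n) (ZMod n) ℝ} :
    (A * Rmat n) * (A * Rmat n)ᵀ = A * Aᵀ := by
  ext i j
  rw [Matrix.mul_apply, Matrix.mul_apply]
  refine Fintype.sum_equiv (Equiv.subLeft (-1)) _ _ fun k => ?_
  simp only [Equiv.subLeft_apply, Matrix.transpose_apply, mul_Rmat_apply]

/-- If `A, B, C, D` are near Williamson matrices of order `n`, then the
four `(-1,1)`-matrices `AR, B, C, D` satisfy `XYᵀ = YXᵀ` for all `X, Y` among them,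
and `(AR)(AR)ᵀ + BBᵀ + CCᵀ + DDᵀ = 4n·I`. -/
theorem nearWilliamson_gives_williamson_type (n : ℕ) [NeZero n]
    (A B C D : Matrix (ZMod n) (ZMod n) ℝ) (h : IsNearWilliamson n A B C D) :
    IsPM1 (A * Rmat n) ∧
    (∀ X ∈ ({A * Rmat n, B, C, D} : Set (Matrix (ZMod n) (ZMod n) ℝ)),
      ∀ Y ∈ ({A * Rmat n, B, C, D} : Set (Matrix (ZMod n) (ZMod n) ℝ)),
        X * Yᵀ = Y * Xᵀ) ∧
    (A * Rmat n) * (A * Rmat n)ᵀ + B * Bᵀ + C * Cᵀ + D * Dᵀ = (4 * n : ℝ) • 1 := by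
  obtain ⟨pA, -, -, -, cA, cB, cC, cD, sB, sC, sD, hsum⟩ := h
  refine ⟨fun i j => ?_, ?_, ?_⟩
  · rw [mul_Rmat_apply]
    exact pA _ _
  · have e := AR_symm cA
    have eB := AR_comm cA cB sB
    have eC := AR_comm cA cC sC
    have eD := AR_comm cA cD sD
    have bc := circ_comm cB cC
    have bd := circ_comm cB cD
    have cd := circ_comm cC cD
    rintro X (rfl | rfl | rfl | rfl) Y (rfl | rfl | rfl | rfl) <;>
      simp only [e, sB.eq, sC.eq, sD.eq] <;>
      first
        | assumption
        | (symm; assumption)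
  · rw [AR_sq]
    exact hsum
end

section
/- Let n be a positive integer and let A, B, C, D be n×n matrices with entries in {-1, 1} (regarded as complex matrices) such that AAᵀ + BBᵀ + CCᵀ + DDᵀ = 4n·I and XYᵀ = YXᵀ for all X, Y ∈ {A, B, C, D}. Then the 2n×2n block matrix H = ((1+i)/2)·[[A + iB, C + iD], [iC + D, -iA - B]] has all its entries in {-i, -1, 1, i} and satisfies HH* = 2n·I, where H* denotes the conjugate transpose; that is, H is a quaternary Hadamard matrix of order 2n. -/
open Matrix Complex

/-- If four `n × n` `(-1,1)`-matrices `A, B, C, D` (regarded as complex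
matrices) satisfy `AAᵀ + BBᵀ + CCᵀ + DDᵀ = 4n·I` and `XYᵀ = YXᵀ` for all
`X, Y ∈ {A, B, C, D}`, then `H = ((1+i)/2)·[[A+iB, C+iD], [iC+D, -iA-B]]` has all
entries in `{-i, -1, 1, i}` and satisfies `HH* = 2n·I`. -/
theorem quaternary_hadamard_construction (n : ℕ) (hn : 0 < n)
    (A B C D : Matrix (Fin n) (Fin n) ℂ)
    (hpm : ∀ X ∈ ({A, B, C, D} : Set (Matrix (Fin n) (Fin n) ℂ)),
      ∀ i j, X i j = 1 ∨ X i j = -1)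
    (hadd : A * Aᵀ + B * Bᵀ + C * Cᵀ + D * Dᵀ = (4 * n : ℂ) • 1)
    (hami : ∀ X ∈ ({A, B, C, D} : Set (Matrix (Fin n) (Fin n) ℂ)),
      ∀ Y ∈ ({A, B, C, D} : Set (Matrix (Fin n) (Fin n) ℂ)), X * Yᵀ = Y * Xᵀ) :
    let H := ((1 + Complex.I) / 2) • Matrix.fromBlocks
      (A + Complex.I • B) (C + Complex.I • D)
      (Complex.I • C + D) (-(Complex.I • A) - B)
    (∀ i j, H i j ∈ ({-Complex.I, -1, 1, Complex.I} : Set ℂ)) ∧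
      H * Hᴴ = (2 * n : ℂ) • 1 := by
  intro H
  have hA := hpm A (by simp)
  have hB := hpm B (by simp)
  have hC := hpm C (by simp)
  have hD := hpm D (by simp)
  have hI : Complex.I * Complex.I = -1 := Complex.I_mul_I
  constructor
  · intro i j
    simp only [Set.mem_insert_iff, Set.mem_singleton_iff]
    rcases i with i | i <;> rcases j with j | j <;>
      simp only [H, Matrix.smul_apply, Matrix.fromBlocks_apply₁₁, Matrix.fromBlocks_apply₁₂,
        Matrix.fromBlocks_apply₂₁, Matrix.fromBlocks_apply₂₂, Matrix.add_apply, Matrix.sub_apply,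
        Matrix.neg_apply, smul_eq_mul]
    · rcases hA i j with h | h <;> rcases hB i j with h' | h' <;> rw [h, h'] <;>
        simp [Complex.ext_iff] <;> norm_num
    · rcases hC i j with h | h <;> rcases hD i j with h' | h' <;> rw [h, h'] <;>
        simp [Complex.ext_iff] <;> norm_num
    · rcases hC i j with h | h <;> rcases hD i j with h' | h' <;> rw [h, h'] <;>
        simp [Complex.ext_iff] <;> norm_num
    · rcases hA i j with h | h <;> rcases hB i j with h' | h' <;> rw [h, h'] <;>
        simp [Complex.ext_iff] <;> norm_num
  · have key : ∀ X : Matrix (Fin n) (Fin n) ℂ, (∀ i j, X i j = 1 ∨ X i j = -1) → Xᴴ = Xᵀ := by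
      intro X hX
      ext i j
      rcases hX j i with h | h <;> simp [Matrix.conjTranspose_apply, h]
    have hAB := hami A (by simp) B (by simp)
    have hAC := hami A (by simp) C (by simp)
    have hAD := hami A (by simp) D (by simp)
    have hBC := hami B (by simp) C (by simp)
    have hBD := hami B (by simp) D (by simp)
    have hCD := hami C (by simp) D (by simp)
    have hc : ((1 + Complex.I) / 2) * star ((1 + Complex.I) / 2) = 1 / 2 := by
      simp [Complex.ext_iff]; norm_num
    have h1 : (2 * n : ℂ) • (1 : Matrix (Fin n ⊕ Fin n) (Fin n ⊕ Fin n) ℂ)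
        = (1 / 2 : ℂ) • Matrix.fromBlocks ((4 * n : ℂ) • 1) 0 0 ((4 * n : ℂ) • 1) := by
      rw [← Matrix.fromBlocks_one, Matrix.fromBlocks_smul, Matrix.fromBlocks_smul]
      simp only [smul_smul, smul_zero]
      congr 2 <;> ring
    have hs : star Complex.I = -Complex.I := Complex.conj_I
    rw [h1, ← hadd]
    simp only [H]
    rw [Matrix.conjTranspose_smul, Matrix.smul_mul, Matrix.mul_smul, smul_smul, hc,
      Matrix.fromBlocks_conjTranspose, Matrix.fromBlocks_multiply]
    simp only [Matrix.conjTranspose_add, Matrix.conjTranspose_sub, Matrix.conjTranspose_neg,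
      Matrix.conjTranspose_smul, key A hA, key B hB, key C hC, key D hD, hs]
    simp only [Matrix.mul_add, Matrix.add_mul, Matrix.mul_sub, Matrix.sub_mul, Matrix.mul_neg,
      Matrix.neg_mul, Matrix.smul_mul, Matrix.mul_smul, neg_smul, mul_neg,
      neg_mul, hAB, hAC, hAD, hBC, hBD, hCD]
    congr 2 <;> match_scalars <;>
      first | ring1 | linear_combination hI | linear_combination -hI
end

section
/- Let A, B, C, D be near Williamson matrices of order n. Then there exists a quaternary Hadamard matrix of order 2n. -/
open Matrix

theorem nw_comm {n : ℕ} [NeZero n] {B C : Matrix (ZMod n) (ZMod n) ℝ}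
    (hB : IsCirculant B) (hC : IsCirculant C) : B * C = C * B := by
  ext i j
  simp only [Matrix.mul_apply]
  apply Fintype.sum_equiv (Equiv.subLeft (i + j))
  intro k
  simp only [Equiv.subLeft_apply]
  rw [hB i k, hC k j, hC i, hB _ j, mul_comm]
  congr 2 <;> abel

theorem nw_commP {n : ℕ} [NeZero n] {A B : Matrix (ZMod n) (ZMod n) ℝ}
    (hA : IsCirculant A) (hB : IsCirculant B) (hs : B.IsSymm) :
    (Matrix.of fun i j => A i (-j)) * B = B * (Matrix.of fun i j => A i (-j)) := by
  ext i j
  simp only [Matrix.mul_apply, Matrix.of_apply]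
  apply Fintype.sum_equiv (Equiv.addRight (i - j))
  intro k
  simp only [Equiv.coe_addRight]
  rw [← hs.apply k j, hA i, hA _ (-j), hB j k, hB i, mul_comm]
  congr 2 <;> abel

theorem nw_sq {n : ℕ} [NeZero n] (A : Matrix (ZMod n) (ZMod n) ℝ) :
    (Matrix.of fun i j => A i (-j)) * (Matrix.of fun i j => A i (-j))ᵀ = A * Aᵀ := by
  ext i j
  simp only [Matrix.mul_apply, Matrix.of_apply, Matrix.transpose_apply]
  exact Fintype.sum_equiv (Equiv.neg _) _ _ (fun k => rfl)

theorem nw_symm {n : ℕ} [NeZero n] {A : Matrix (ZMod n) (ZMod n) ℝ}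
    (hA : IsCirculant A) : (Matrix.of fun i j => A i (-j)).IsSymm := by
  ext i j
  simp only [Matrix.of_apply, Matrix.transpose_apply]
  rw [hA i, hA j]
  congr 1; abel

/-- the combination of two real matrices into a quaternary one -/
noncomputable def nwX {n : ℕ} (P B : Matrix (ZMod n) (ZMod n) ℝ) :
    Matrix (ZMod n) (ZMod n) ℂ :=
  ((1 + Complex.I) / 2) • P.map Complex.ofRealHom + ((1 - Complex.I) / 2) • B.map Complex.ofRealHom

theorem nwX_H {n : ℕ} {P B : Matrix (ZMod n) (ZMod n) ℝ} (hP : P.IsSymm) (hB : B.IsSymm) :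
    (nwX P B)ᴴ = nwX B P := by
  ext i j
  simp [nwX, Matrix.conjTranspose_apply, hP.apply, hB.apply]
  ring

theorem nwX_mul {n : ℕ} [NeZero n] {P B C D : Matrix (ZMod n) (ZMod n) ℝ}
    (h1 : P * C = C * P) (h2 : P * D = D * P) (h3 : B * C = C * B) (h4 : B * D = D * B) :
    nwX P B * nwX C D = nwX C D * nwX P B := by
  simp only [nwX, mul_add, add_mul, smul_mul_assoc, mul_smul_comm, ← Matrix.map_mul, h1, h2, h3, h4,
    smul_add, smul_smul]
  simp only [mul_comm]
  abel

theorem nwX_self {n : ℕ} [NeZero n] {P B : Matrix (ZMod n) (ZMod n) ℝ}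
    (h1 : P * B = B * P) :
    nwX P B * nwX B P = ((1 : ℂ) / 2) • (P * P + B * B).map Complex.ofRealHom := by
  rw [Matrix.map_add _ (map_add _)]
  simp only [nwX, mul_add, add_mul, smul_mul_assoc, mul_smul_comm, ← Matrix.map_mul, h1,
    smul_add, smul_smul]
  ext i j
  simp only [Matrix.add_apply, Matrix.smul_apply, smul_eq_mul]
  linear_combination (((B * P).map Complex.ofRealHom i j) / 2 - ((P * P).map Complex.ofRealHom i j) / 4
    - ((B * B).map Complex.ofRealHom i j) / 4) * Complex.I_sq

theorem nwX_mem {n : ℕ} {P B : Matrix (ZMod n) (ZMod n) ℝ} (hP : IsPM1 P) (hB : IsPM1 B) (i j) :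
    nwX P B i j ∈ ({-Complex.I, -1, 1, Complex.I} : Set ℂ) := by
  simp only [nwX, Matrix.add_apply, Matrix.smul_apply, Matrix.map_apply, smul_eq_mul,
    Set.mem_insert_iff, Set.mem_singleton_iff]
  rcases hP i j with h | h <;> rcases hB i j with h' | h' <;> rw [h, h'] <;> simp only [map_one, map_neg]
  · right; right; left; ring
  · right; right; right; ring
  · left; ring
  · right; left; ring

theorem nw_neg {z : ℂ} (h : z ∈ ({-Complex.I, -1, 1, Complex.I} : Set ℂ)) :
    -z ∈ ({-Complex.I, -1, 1, Complex.I} : Set ℂ) := by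
  simp only [Set.mem_insert_iff, Set.mem_singleton_iff] at *
  rcases h with h | h | h | h <;> simp [h]

theorem nw_core (n : ℕ) [NeZero n] (P B C D : Matrix (ZMod n) (ZMod n) ℝ)
    (pP : IsPM1 P) (pB : IsPM1 B) (pC : IsPM1 C) (pD : IsPM1 D)
    (sP : P.IsSymm) (sB : B.IsSymm) (sC : C.IsSymm) (sD : D.IsSymm)
    (hPB : P * B = B * P) (hPC : P * C = C * P) (hPD : P * D = D * P)
    (hBC : B * C = C * B) (hBD : B * D = D * B) (hCD : C * D = D * C)
    (hs : P * P + B * B + C * C + D * D = (4 * n : ℝ) • 1) :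
    ∃ H : Matrix (Fin (2 * n)) (Fin (2 * n)) ℂ,
      (∀ i j, H i j ∈ ({-Complex.I, -1, 1, Complex.I} : Set ℂ)) ∧
      H * Hᴴ = (2 * n : ℂ) • 1 := by
  have e : ZMod n ⊕ ZMod n ≃ Fin (2 * n) := Fintype.equivOfCardEq (by simp [ZMod.card]; ring)
  have hsum : ((1 : ℂ) / 2) • (P * P + B * B).map Complex.ofRealHom
      + ((1 : ℂ) / 2) • (C * C + D * D).map Complex.ofRealHom = (2 * n : ℂ) • 1 := by
    rw [← smul_add, ← Matrix.map_add _ (map_add _), ← add_assoc, hs]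
    ext i j
    by_cases hij : i = j
    · subst hij
      simp
      ring
    · simp [hij]
  let K : Matrix (ZMod n ⊕ ZMod n) (ZMod n ⊕ ZMod n) ℂ :=
    Matrix.fromBlocks (nwX P B) (nwX C D) (-nwX D C) (nwX B P)
  have hK : K * Kᴴ = (2 * n : ℂ) • 1 := by
    simp only [K, Matrix.fromBlocks_conjTranspose, Matrix.fromBlocks_multiply,
      Matrix.conjTranspose_neg, nwX_H sP sB, nwX_H sC sD, nwX_H sB sP, nwX_H sD sC]
    rw [← Matrix.fromBlocks_one, Matrix.fromBlocks_smul]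
    congr 1
    · rw [nwX_self hPB, nwX_self hCD, hsum]
    · rw [mul_neg, nwX_mul hPC hPD hBC hBD]; simp
    · rw [neg_mul, nwX_mul hBD.symm hPD.symm hBC.symm hPC.symm]; simp
    · rw [neg_mul_neg, nwX_self hCD.symm, nwX_self hPB.symm, add_comm (D * D), add_comm (B * B),
        add_comm, hsum]
  refine ⟨Matrix.reindex e e K, ?_, ?_⟩
  · intro i j
    simp only [Matrix.reindex_apply, Matrix.submatrix_apply]
    rcases e.symm i with i | i <;> rcases e.symm j with j | j
    · exact nwX_mem pP pB i j
    · exact nwX_mem pC pD i j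
    · exact nw_neg (nwX_mem pD pC i j)
    · exact nwX_mem pB pP i j
  · simp only [Matrix.reindex_apply, Matrix.conjTranspose_submatrix]
    rw [Matrix.submatrix_mul_equiv, hK]
    ext i j
    simp [Matrix.one_apply]

/-- Near Williamson matrices of order `n` give a quaternary Hadamard
matrix of order `2n`: a `2n × 2n` complex matrix `H` with entries in `{-i, -1, 1, i}`
satisfying `HH* = 2n·I`. -/
theorem nearWilliamson_gives_quaternary_hadamard (n : ℕ) [NeZero n]
    (A B C D : Matrix (ZMod n) (ZMod n) ℝ) (h : IsNearWilliamson n A B C D) :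
    ∃ H : Matrix (Fin (2 * n)) (Fin (2 * n)) ℂ,
      (∀ i j, H i j ∈ ({-Complex.I, -1, 1, Complex.I} : Set ℂ)) ∧
      H * Hᴴ = (2 * n : ℂ) • 1 := by
  obtain ⟨pA, pB, pC, pD, cA, cB, cC, cD, sB, sC, sD, hs⟩ := h
  have sP := nw_symm cA
  refine nw_core n (Matrix.of fun i j => A i (-j)) B C D (fun i j => pA i (-j)) pB pC pD sP sB sC sD
    (nw_commP cA cB sB) (nw_commP cA cC sC) (nw_commP cA cD sD)
    (nw_comm cB cC) (nw_comm cB cD) (nw_comm cC cD) ?_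
  rw [← nw_sq A, sP.eq, sB.eq, sC.eq, sD.eq] at hs
  exact hs
end

section
/- There exist near Williamson matrices of order 47; that is, there exist a 47×47 circulant (-1,1)-matrix A and three 47×47 symmetric circulant (-1,1)-matrices B, C, D such that AAᵀ + BBᵀ + CCᵀ + DDᵀ = 188·I. -/
open Matrix

/-- The `(-1,1)`-sequence on `ZMod 47` whose `-1` positions are the bits of `m`. -/
def nwSeq (m : ℕ) (x : ZMod 47) : ℤ := if m.testBit x.val then -1 else 1

/-- The circulant matrix of `nwSeq m`. -/
noncomputable def nwMat (m : ℕ) : Matrix (ZMod 47) (ZMod 47) ℝ :=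
  fun i j => (nwSeq m (j - i) : ℝ)

/-- Periodic autocorrelation. -/
def nwPaf (m : ℕ) (d : ZMod 47) : ℤ := ∑ k : ZMod 47, nwSeq m k * nwSeq m (k - d)

theorem nwMat_pm1 (m : ℕ) : IsPM1 (nwMat m) := by
  intro i j
  unfold nwMat nwSeq
  split_ifs <;> simp

theorem nwMat_circ (m : ℕ) : IsCirculant (nwMat m) := by
  intro i j
  simp [nwMat]

theorem nwMat_symm (m : ℕ) (h : ∀ x, nwSeq m (-x) = nwSeq m x) : (nwMat m).IsSymm := by
  ext i j
  simp only [Matrix.transpose_apply, nwMat]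
  rw [← h (i - j), neg_sub]

theorem nwMat_mul (m : ℕ) (i j : ZMod 47) :
    (nwMat m * (nwMat m)ᵀ) i j = (nwPaf m (j - i) : ℝ) := by
  simp only [Matrix.mul_apply, Matrix.transpose_apply, nwMat, nwPaf]
  push_cast
  refine Fintype.sum_equiv (Equiv.subRight i) _ _ fun k => ?_
  simp

theorem nwPaf_sum : ∀ d : ZMod 47,
    nwPaf 71353044923869 d + nwPaf 114473425123350 d + nwPaf 28574322999192 d
      + nwPaf 46277628487764 d = if d = 0 then 188 else 0 := by
  decide +kernel

/-- There exist near Williamson matrices of order 47: a circulant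
`(-1,1)`-matrix `A` and symmetric circulant `(-1,1)`-matrices `B, C, D` of order
47 with `AAᵀ + BBᵀ + CCᵀ + DDᵀ = 188·I`. -/
theorem exists_nearWilliamson_47 :
    ∃ A B C D : Matrix (ZMod 47) (ZMod 47) ℝ,
      IsPM1 A ∧ IsPM1 B ∧ IsPM1 C ∧ IsPM1 D ∧
      IsCirculant A ∧ IsCirculant B ∧ IsCirculant C ∧ IsCirculant D ∧
      B.IsSymm ∧ C.IsSymm ∧ D.IsSymm ∧
      A * Aᵀ + B * Bᵀ + C * Cᵀ + D * Dᵀ = (188 : ℝ) • 1 := by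
  refine ⟨nwMat 71353044923869, nwMat 114473425123350, nwMat 28574322999192,
    nwMat 46277628487764, nwMat_pm1 _, nwMat_pm1 _, nwMat_pm1 _, nwMat_pm1 _,
    nwMat_circ _, nwMat_circ _, nwMat_circ _, nwMat_circ _,
    nwMat_symm _ (by decide +kernel), nwMat_symm _ (by decide +kernel),
    nwMat_symm _ (by decide +kernel), ?_⟩
  ext i j
  simp only [Matrix.add_apply, nwMat_mul, Matrix.smul_apply, Matrix.one_apply, smul_eq_mul]
  have h := congrArg (Int.cast : ℤ → ℝ) (nwPaf_sum (j - i))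
  push_cast at h
  rw [h]
  by_cases hij : i = j
  · simp [hij]
  · have : j - i ≠ 0 := fun e => hij (sub_eq_zero.mp e).symm
    simp [hij, this]
end

section
/- There exist near Williamson matrices of order 53; that is, there exist a 53×53 circulant (-1,1)-matrix A and three 53×53 symmetric circulant (-1,1)-matrices B, C, D such that AAᵀ + BBᵀ + CCᵀ + DDᵀ = 212·I. -/
open Matrix

def nwS (m : ℕ) (x : ZMod 53) : ℤ := bif m.testBit x.val then -1 else 1

def nwA : ℕ := 2846275473324388
def nwB : ℕ := 8521149101369502
def nwC : ℕ := 355396417433760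
def nwD : ℕ := 4332924063762876

def nwM (m : ℕ) : Matrix (ZMod 53) (ZMod 53) ℝ := fun i j => (nwS m (j - i) : ℝ)

theorem nw_pm (m : ℕ) : IsPM1 (nwM m) := by
  intro i j
  unfold nwM nwS
  cases m.testBit (j - i).val <;> simp

theorem nw_circ (m : ℕ) : IsCirculant (nwM m) := by
  intro i j
  simp [nwM]

theorem nw_symm_s8 (m : ℕ) (h : ∀ x, nwS m (-x) = nwS m x) : (nwM m).IsSymm := by
  ext i j
  simp only [nwM, Matrix.transpose_apply]
  rw [← h, neg_sub]

theorem nw_mul (m : ℕ) (i j : ZMod 53) :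
    (nwM m * (nwM m)ᵀ) i j = ((∑ x, nwS m x * nwS m (x + (i - j)) : ℤ) : ℝ) := by
  rw [Matrix.mul_apply, ← (Equiv.addRight i).sum_comp]
  push_cast
  refine Finset.sum_congr rfl fun x _ => ?_
  simp only [nwM, Matrix.transpose_apply, Equiv.coe_addRight, add_sub_cancel_right, add_sub_assoc]
  simp

theorem nw_symB : ∀ x, nwS nwB (-x) = nwS nwB x := by decide +kernel
theorem nw_symC : ∀ x, nwS nwC (-x) = nwS nwC x := by decide +kernel
theorem nw_symD : ∀ x, nwS nwD (-x) = nwS nwD x := by decide +kernel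

theorem nw_paf : ∀ d : ZMod 53,
    (∑ x, nwS nwA x * nwS nwA (x + d)) + (∑ x, nwS nwB x * nwS nwB (x + d))
    + (∑ x, nwS nwC x * nwS nwC (x + d)) + (∑ x, nwS nwD x * nwS nwD (x + d))
      = if d = 0 then 212 else 0 := by decide +kernel

/-- There exist near Williamson matrices of order 53: a circulant
`(-1,1)`-matrix `A` and symmetric circulant `(-1,1)`-matrices `B, C, D` of order
53 with `AAᵀ + BBᵀ + CCᵀ + DDᵀ = 212·I`. -/
theorem exists_nearWilliamson_53 :
    ∃ A B C D : Matrix (ZMod 53) (ZMod 53) ℝ,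
      IsPM1 A ∧ IsPM1 B ∧ IsPM1 C ∧ IsPM1 D ∧
      IsCirculant A ∧ IsCirculant B ∧ IsCirculant C ∧ IsCirculant D ∧
      B.IsSymm ∧ C.IsSymm ∧ D.IsSymm ∧
      A * Aᵀ + B * Bᵀ + C * Cᵀ + D * Dᵀ = (212 : ℝ) • 1 := by
  refine ⟨nwM nwA, nwM nwB, nwM nwC, nwM nwD, nw_pm _, nw_pm _, nw_pm _, nw_pm _,
    nw_circ _, nw_circ _, nw_circ _, nw_circ _, nw_symm_s8 _ nw_symB, nw_symm_s8 _ nw_symC,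
    nw_symm_s8 _ nw_symD, ?_⟩
  ext i j
  simp only [Matrix.add_apply, nw_mul, Matrix.smul_apply, Matrix.one_apply, smul_eq_mul]
  have h := nw_paf (i - j)
  have h2 := congrArg (fun z : ℤ => (z : ℝ)) h
  simp only [Int.cast_add] at h2
  rw [h2]
  by_cases hij : i = j
  · simp [hij]
  · simp [hij, sub_eq_zero]
end

section
/- There exists a quaternary Hadamard matrix of order 118, i.e., a 118×118 complex matrix H with all entries in {-i, -1, 1, i} satisfying HH* = 118·I. -/
open Matrix

namespace QH118

/-- The fourth root of unity `i ^ e` as a Gaussian integer. -/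
def unit4 (e : ℕ) : GaussianInt :=
  match e with
  | 0 => ⟨1, 0⟩
  | 1 => ⟨0, 1⟩
  | 2 => ⟨-1, 0⟩
  | _ => ⟨0, -1⟩

/-- First sequence of a quaternary Legendre pair of length 58 (base 4 digits). -/
def a (x : Fin 58) : GaussianInt :=
  unit4 (14694219621318937533537980962784736 / 4 ^ x.val % 4)

/-- Second sequence of the pair. -/
def b (x : Fin 58) : GaussianInt :=
  unit4 (71100619932028966707035542849360796 / 4 ^ x.val % 4)

abbrev A : Matrix (Fin 58) (Fin 58) GaussianInt := circulant a
abbrev B : Matrix (Fin 58) (Fin 58) GaussianInt := circulant b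

abbrev a' : Fin 58 → GaussianInt := fun i => star (a (-i))
abbrev b' : Fin 58 → GaussianInt := fun i => star (b (-i))

theorem A_star : Aᴴ = circulant a' := conjTranspose_circulant a
theorem B_star : Bᴴ = circulant b' := conjTranspose_circulant b

theorem paf : ∀ d : Fin 58, (∑ x, a (d - x) * star (a (-x))) + (∑ x, b (d - x) * star (b (-x)))
    = if d = 0 then 116 else -2 := by
  decide +kernel

theorem sum_a : ∑ x, a x = 0 := by decide +kernel
theorem sum_b : ∑ x, b x = ⟨1, 1⟩ := by decide +kernel

theorem gram (i j : Fin 58) : (A * Aᴴ + B * Bᴴ) i j = if i = j then 116 else -2 := by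
  rw [A_star, B_star, circulant_mul, circulant_mul, ← circulant_add, circulant_apply]
  have := paf (i - j)
  simp only [sub_eq_zero] at this
  exact this

/-- Two border rows, corner part. -/
def U : Matrix (Fin 2) (Fin 2) GaussianInt := !![-1, ⟨0, 1⟩; ⟨0, -1⟩, 1]

def T : Matrix (Fin 2) (Fin 58 ⊕ Fin 58) GaussianInt :=
  Matrix.of fun i j => Sum.elim (fun _ => 1) (fun _ => if i = 0 then 1 else -1) j

def W : Matrix (Fin 58 ⊕ Fin 58) (Fin 2) GaussianInt :=
  Matrix.of fun i j => Sum.elim (fun _ => 1) (fun _ => if j = 0 then 1 else -1) i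

def K : Matrix (Fin 58 ⊕ Fin 58) (Fin 58 ⊕ Fin 58) GaussianInt :=
  fromBlocks A B Bᴴ (-Aᴴ)

theorem AB : A * B = B * A := circulant_mul_comm _ _
theorem AA : Aᴴ * A = A * Aᴴ := by rw [A_star]; exact circulant_mul_comm _ _
theorem BB : Bᴴ * B = B * Bᴴ := by rw [B_star]; exact circulant_mul_comm _ _

theorem K_gram : K * Kᴴ = fromBlocks (A * Aᴴ + B * Bᴴ) 0 0 (A * Aᴴ + B * Bᴴ) := by
  have h : Bᴴ * Aᴴ = Aᴴ * Bᴴ := by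
    rw [← conjTranspose_mul, ← conjTranspose_mul, AB]
  rw [K, fromBlocks_conjTranspose, fromBlocks_multiply]
  simp only [conjTranspose_conjTranspose, conjTranspose_neg, Matrix.mul_neg, Matrix.neg_mul,
    neg_neg]
  rw [AB, h, AA, BB, add_comm (B * Bᴴ)]
  simp

theorem blk22 : W * Wᴴ + K * Kᴴ = (118 : GaussianInt) • 1 := by
  rw [K_gram]
  ext1 i j
  rw [Matrix.add_apply]
  rcases i with i | i <;> rcases j with j | j <;>
    simp only [fromBlocks_apply₁₁, fromBlocks_apply₁₂, fromBlocks_apply₂₁, fromBlocks_apply₂₂,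
      gram, Matrix.mul_apply, Fin.sum_univ_two, W, Matrix.smul_apply, Matrix.one_apply,
      conjTranspose_apply, Matrix.of_apply, Sum.elim_inl, Sum.elim_inr, Sum.inl.injEq,
      Sum.inr.injEq, Matrix.zero_apply, reduceCtorEq, if_false]
  · split_ifs <;> decide
  · decide
  · decide
  · split_ifs <;> decide

theorem blk11 : U * Uᴴ + T * Tᴴ = (118 : GaussianInt) • 1 := by
  decide +kernel

theorem blk12 : U * Wᴴ + T * Kᴴ = 0 := by
  decide +kernel

theorem blk21 : W * Uᴴ + K * Tᴴ = 0 := by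
  have := congrArg conjTranspose blk12
  simpa using this

def M : Matrix (Fin 2 ⊕ (Fin 58 ⊕ Fin 58)) (Fin 2 ⊕ (Fin 58 ⊕ Fin 58)) GaussianInt :=
  fromBlocks U T W K

theorem M_gram : M * Mᴴ = (118 : GaussianInt) • 1 := by
  rw [M, fromBlocks_conjTranspose, fromBlocks_multiply, blk11, blk12, blk21, blk22]
  ext1 i j
  rcases i with i | i <;> rcases j with j | j <;> simp [Matrix.one_apply]

abbrev Q : List GaussianInt := [⟨0, -1⟩, -1, 1, ⟨0, 1⟩]

theorem a_mem : ∀ x, a x ∈ Q := by decide +kernel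
theorem b_mem : ∀ x, b x ∈ Q := by decide +kernel
theorem a_mem' : ∀ x, -star (a x) ∈ Q := by decide +kernel
theorem b_mem' : ∀ x, star (b x) ∈ Q := by decide +kernel
theorem U_mem (i j) : U i j ∈ Q := by
  fin_cases i <;> fin_cases j <;> decide

theorem M_mem_list : ∀ i j, M i j ∈ Q := by
  rintro (i | i | i) (j | j | j)
  · exact U_mem i j
  · change (1 : GaussianInt) ∈ Q; decide
  · change (if i = 0 then (1 : GaussianInt) else -1) ∈ Q; split_ifs <;> decide
  · change (1 : GaussianInt) ∈ Q; decide
  · exact a_mem (i - j)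
  · exact b_mem (i - j)
  · change (if j = 0 then (1 : GaussianInt) else -1) ∈ Q; split_ifs <;> decide
  · exact b_mem' (j - i)
  · exact a_mem' (j - i)

theorem M_mem (i j) : M i j = ⟨0, -1⟩ ∨ M i j = -1 ∨ M i j = 1 ∨ M i j = ⟨0, 1⟩ := by
  simpa using M_mem_list i j

def e : Fin 2 ⊕ (Fin 58 ⊕ Fin 58) ≃ Fin 118 :=
  (Equiv.sumCongr (Equiv.refl _) finSumFinEquiv).trans finSumFinEquiv

end QH118

/-- There exists a quaternary Hadamard matrix of order 118: a
`118 × 118` complex matrix `H` with all entries in `{-i, -1, 1, i}` satisfying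
`HH* = 118·I`. -/
theorem exists_quaternary_hadamard_118 :
    ∃ H : Matrix (Fin 118) (Fin 118) ℂ,
      (∀ i j, H i j ∈ ({-Complex.I, -1, 1, Complex.I} : Set ℂ)) ∧
      H * Hᴴ = (118 : ℂ) • 1 := by
  refine ⟨(QH118.M.map GaussianInt.toComplex).submatrix QH118.e.symm QH118.e.symm, ?_, ?_⟩
  · intro i j
    rw [submatrix_apply, Matrix.map_apply]
    rcases QH118.M_mem (QH118.e.symm i) (QH118.e.symm j) with h | h | h | h <;> rw [h] <;>
      simp [GaussianInt.toComplex_def']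
  · have hs : (QH118.M.map GaussianInt.toComplex)ᴴ = QH118.Mᴴ.map GaussianInt.toComplex := by
      ext i j
      simp [GaussianInt.toComplex_star]
    rw [conjTranspose_submatrix, submatrix_mul_equiv, hs, ← Matrix.map_mul, QH118.M_gram]
    ext i j
    simp only [submatrix_apply, Matrix.map_apply, Matrix.smul_apply, Matrix.one_apply,
      EmbeddingLike.apply_eq_iff_eq]
    split_ifs
    · simpa using map_ofNat GaussianInt.toComplex 118
    · simp
end

section
/- There exists a Hadamard matrix of order 236; in particular, plugging near Williamson matrices of order 59 into the Williamson array (replacing A by AR, with R the 59×59 back circulant (0,1)-matrix whose first row is (0,…,0,1)) yields a 236×236 (-1,1)-matrix W with WWᵀ = 236·I. -/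
open Matrix

/-! Four (-1,1)-sequences of length 59 with vanishing total periodic autocorrelation,
obtained from Turyn-type sequences of lengths 20, 20, 20, 19, plugged into the
Goethals-Seidel array. -/

def seqZ (m : ℕ) (i : Fin 59) : ℤ := if m.testBit i.val then 1 else -1

def seqR (m : ℕ) (i : ZMod 59) : ℝ := ((seqZ m i : ℤ) : ℝ)

def mA : ℕ := 520811994558544084
def mB : ℕ := 333024205351991508
def mC : ℕ := 55648757020932308
def mD : ℕ := 243436547676616916

lemma paf_int : ∀ s : Fin 59, ∑ k : Fin 59,
    (seqZ mA (s - k) * seqZ mA (-k) + seqZ mB (s - k) * seqZ mB (-k)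
    + seqZ mC (s - k) * seqZ mC (-k) + seqZ mD (s - k) * seqZ mD (-k))
    = if s = 0 then 236 else 0 := by
  decide +kernel

lemma seqR_pm (m : ℕ) (i : ZMod 59) : seqR m i = 1 ∨ seqR m i = -1 := by
  unfold seqR seqZ
  split_ifs <;> simp

/-- circulant with transposed vector -/
lemma circ_sum :
    circulant (seqR mA) * circulant (fun i => seqR mA (-i))
    + circulant (seqR mB) * circulant (fun i => seqR mB (-i))
    + circulant (seqR mC) * circulant (fun i => seqR mC (-i))
    + circulant (seqR mD) * circulant (fun i => seqR mD (-i)) = (236 : ℝ) • 1 := by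
  simp only [circulant_mul, ← circulant_add]
  rw [← circulant_single_one ℝ (ZMod 59), ← circulant_smul]
  congr 1
  funext s
  have h := congrArg (fun z : ℤ => (z : ℝ)) (paf_int s)
  have h2 : ∑ k : ZMod 59, (seqR mA (s - k) * seqR mA (-k) + seqR mB (s - k) * seqR mB (-k)
    + seqR mC (s - k) * seqR mC (-k) + seqR mD (s - k) * seqR mD (-k))
    = if s = 0 then 236 else 0 := by
    refine Eq.trans ?_ (h.trans ?_)
    · push_cast
      rfl
    · push_cast
      rfl
  simp only [Finset.sum_add_distrib] at h2
  simp only [Pi.add_apply, Pi.smul_apply, mulVec, dotProduct, circulant_apply, h2, Pi.single_apply]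
  simp

lemma R_symm : (Rmat 59)ᵀ = Rmat 59 := by
  ext i j
  simp [Rmat, add_comm]

lemma mulR_apply (M : Matrix (ZMod 59) (ZMod 59) ℝ) (i j) :
    (M * Rmat 59) i j = M i (-1 - j) := by
  simp only [Matrix.mul_apply, Rmat, Matrix.of_apply]
  rw [Finset.sum_eq_single (-1 - j)]
  · simp
  · intro b _ hb
    rw [if_neg, mul_zero]
    intro h
    exact hb (by rw [← h]; ring)
  · simp

lemma Rmul_apply (M : Matrix (ZMod 59) (ZMod 59) ℝ) (i j) :
    (Rmat 59 * M) i j = M (-1 - i) j := by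
  have := mulR_apply Mᵀ j i
  rw [← R_symm, ← Matrix.transpose_mul, Matrix.transpose_apply] at this
  exact this

lemma R_sq : Rmat 59 * Rmat 59 = 1 := by
  ext i j
  rw [Rmul_apply]
  simp only [Rmat, Matrix.of_apply, Matrix.one_apply]
  congr 1
  apply propext
  constructor
  · intro h
    linear_combination -h
  · rintro rfl
    ring

lemma R_circ (v : ZMod 59 → ℝ) :
    Rmat 59 * circulant v = circulant (fun i => v (-i)) * Rmat 59 := by
  ext i j
  rw [Rmul_apply, mulR_apply]
  simp only [circulant_apply]
  congr 1
  ring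

lemma R_sq' (M : Matrix (ZMod 59) (ZMod 59) ℝ) : Rmat 59 * (Rmat 59 * M) = M := by
  rw [← Matrix.mul_assoc, R_sq, Matrix.one_mul]

lemma R_circ' (v : ZMod 59 → ℝ) (M : Matrix (ZMod 59) (ZMod 59) ℝ) :
    Rmat 59 * (circulant v * M) = circulant (fun i => v (-i)) * (Rmat 59 * M) := by
  rw [← Matrix.mul_assoc, R_circ, Matrix.mul_assoc]

lemma circ_comm_s19 (v w : ZMod 59 → ℝ) :
    circulant v * circulant w = circulant w * circulant v := circulant_mul_comm v w

lemma circ_left_comm (v w : ZMod 59 → ℝ) (M : Matrix (ZMod 59) (ZMod 59) ℝ) :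
    circulant v * (circulant w * M) = circulant w * (circulant v * M) := by
  rw [← Matrix.mul_assoc, circ_comm_s19, Matrix.mul_assoc]

lemma smul_one_blocks {m : Type*} [DecidableEq m] (c : ℝ) :
    (c • 1 : Matrix ((m ⊕ m) ⊕ (m ⊕ m)) ((m ⊕ m) ⊕ (m ⊕ m)) ℝ) =
    fromBlocks (fromBlocks (c • 1) 0 0 (c • 1)) (fromBlocks 0 0 0 0)
      (fromBlocks 0 0 0 0) (fromBlocks (c • 1) 0 0 (c • 1)) := by
  rw [← fromBlocks_one, ← fromBlocks_one, fromBlocks_smul, fromBlocks_smul]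
  simp

lemma block_mul {m : Type*} [Fintype m] [DecidableEq m] {c : ℝ}
    {A1 A2 A3 A4 B1 B2 B3 B4 C1 C2 C3 C4 D1 D2 D3 D4 : Matrix m m ℝ}
    (h11 : A1 * A1ᵀ + A2 * A2ᵀ + A3 * A3ᵀ + A4 * A4ᵀ = c • 1)
    (h22 : B1 * B1ᵀ + B2 * B2ᵀ + B3 * B3ᵀ + B4 * B4ᵀ = c • 1)
    (h33 : C1 * C1ᵀ + C2 * C2ᵀ + C3 * C3ᵀ + C4 * C4ᵀ = c • 1)
    (h44 : D1 * D1ᵀ + D2 * D2ᵀ + D3 * D3ᵀ + D4 * D4ᵀ = c • 1)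
    (h12 : A1 * B1ᵀ + A2 * B2ᵀ + A3 * B3ᵀ + A4 * B4ᵀ = 0)
    (h13 : A1 * C1ᵀ + A2 * C2ᵀ + A3 * C3ᵀ + A4 * C4ᵀ = 0)
    (h14 : A1 * D1ᵀ + A2 * D2ᵀ + A3 * D3ᵀ + A4 * D4ᵀ = 0)
    (h23 : B1 * C1ᵀ + B2 * C2ᵀ + B3 * C3ᵀ + B4 * C4ᵀ = 0)
    (h24 : B1 * D1ᵀ + B2 * D2ᵀ + B3 * D3ᵀ + B4 * D4ᵀ = 0)
    (h34 : C1 * D1ᵀ + C2 * D2ᵀ + C3 * D3ᵀ + C4 * D4ᵀ = 0) :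
    (fromBlocks (fromBlocks A1 A2 B1 B2) (fromBlocks A3 A4 B3 B4)
      (fromBlocks C1 C2 D1 D2) (fromBlocks C3 C4 D3 D4)) *
    (fromBlocks (fromBlocks A1 A2 B1 B2) (fromBlocks A3 A4 B3 B4)
      (fromBlocks C1 C2 D1 D2) (fromBlocks C3 C4 D3 D4))ᵀ = c • 1 := by
  have T := fun {X : Matrix m m ℝ} (h : X = 0) => (congrArg transpose h)
  have h21 := T h12
  have h31 := T h13
  have h41 := T h14
  have h32 := T h23
  have h42 := T h24
  have h43 := T h34
  simp only [transpose_add, transpose_mul, transpose_transpose, transpose_zero] at *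
  rw [smul_one_blocks]
  simp only [fromBlocks_transpose, fromBlocks_multiply, fromBlocks_add, ← add_assoc, *]

lemma isCirculant_eq {X : Matrix (ZMod 59) (ZMod 59) ℝ} (h : IsCirculant X) :
    ∃ v, X = circulant v := by
  refine ⟨fun k => X 0 (-k), ?_⟩
  ext i j
  rw [h i j, circulant_apply]
  congr 1
  ring

lemma symm_circ {v : ZMod 59 → ℝ} (h : (circulant v).IsSymm) : (fun i => v (-i)) = v := by
  have h2 : (circulant v)ᵀ = circulant v := h
  rw [transpose_circulant] at h2
  exact circulant_injective h2

theorem part1 (A B C D : Matrix (ZMod 59) (ZMod 59) ℝ) (H : IsNearWilliamson 59 A B C D) :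
      let E := A * Rmat 59
      let W := Matrix.fromBlocks
        (Matrix.fromBlocks E B (-B) E) (Matrix.fromBlocks C D D (-C))
        (Matrix.fromBlocks (-C) (-D) (-D) C) (Matrix.fromBlocks E B (-B) E)
      (∀ i j, W i j = 1 ∨ W i j = -1) ∧ W * Wᵀ = (236 : ℝ) • 1 := by
  intro E W
  obtain ⟨pA, pB, pC, pD, cA, cB, cC, cD, sB, sC, sD, h⟩ := H
  constructor
  · have pE : IsPM1 E := fun i j => by
      rw [show E i j = A i (-1 - j) from mulR_apply A i j]
      exact pA _ _
    have neg : ∀ {X : Matrix (ZMod 59) (ZMod 59) ℝ}, IsPM1 X → IsPM1 (-X) := by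
      intro X hX i j
      rcases hX i j with h | h <;> simp [h]
    rintro ((i | i) | (i | i)) ((j | j) | (j | j))
    all_goals first
      | exact pE i j | exact pB i j | exact pC i j | exact pD i j
      | exact neg pB i j | exact neg pC i j | exact neg pD i j
  · obtain ⟨a, rfl⟩ := isCirculant_eq cA
    obtain ⟨b, rfl⟩ := isCirculant_eq cB
    obtain ⟨c, rfl⟩ := isCirculant_eq cC
    obtain ⟨d, rfl⟩ := isCirculant_eq cD
    have hb := symm_circ sB
    have hc := symm_circ sC
    have hd := symm_circ sD
    have e : (4 * ((59 : ℕ) : ℝ)) = 236 := by norm_num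
    rw [e] at h
    simp only [transpose_circulant, hb, hc, hd] at h
    apply block_mul
    all_goals
      simp only [E, transpose_mul, transpose_neg, transpose_circulant, R_symm, Matrix.mul_assoc,
        R_circ, R_circ', R_sq, R_sq', Matrix.mul_neg, Matrix.neg_mul, neg_neg, hb, hc, hd,
        circ_comm_s19, circ_left_comm, Matrix.mul_one]
    all_goals first
      | exact h
      | (rw [← h]; abel; done)
      | (rw [← h]; simp only [circ_comm_s19]; abel; done)
      | (abel; done)

theorem part2 : ∃ W : Matrix ((ZMod 59 ⊕ ZMod 59) ⊕ (ZMod 59 ⊕ ZMod 59))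
      ((ZMod 59 ⊕ ZMod 59) ⊕ (ZMod 59 ⊕ ZMod 59)) ℝ,
    (∀ i j, W i j = 1 ∨ W i j = -1) ∧ W * Wᵀ = (236 : ℝ) • 1 := by
  have h := circ_sum
  have pA := seqR_pm mA
  have pB := seqR_pm mB
  have pC := seqR_pm mC
  have pD := seqR_pm mD
  generalize seqR mA = a at *
  generalize seqR mB = b at *
  generalize seqR mC = c at *
  generalize seqR mD = d at *
  let a' : ZMod 59 → ℝ := fun i => a (-i)
  let b' : ZMod 59 → ℝ := fun i => b (-i)
  let c' : ZMod 59 → ℝ := fun i => c (-i)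
  let d' : ZMod 59 → ℝ := fun i => d (-i)
  let R := Rmat 59
  refine ⟨fromBlocks
    (fromBlocks (circulant a) (circulant b * R) (-(circulant b * R)) (circulant a))
    (fromBlocks (circulant c * R) (circulant d * R) (circulant d' * R) (-(circulant c' * R)))
    (fromBlocks (-(circulant c * R)) (-(circulant d' * R)) (-(circulant d * R)) (circulant c' * R))
    (fromBlocks (circulant a) (circulant b' * R) (-(circulant b' * R)) (circulant a)), ?_, ?_⟩
  · have pm : ∀ {v : ZMod 59 → ℝ}, (∀ i, v i = 1 ∨ v i = -1) → IsPM1 (circulant v) :=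
      fun hv i j => hv _
    have pr : ∀ {X : Matrix (ZMod 59) (ZMod 59) ℝ}, IsPM1 X → IsPM1 (X * R) := by
      intro X hX i j
      rw [mulR_apply X i j]
      exact hX _ _
    have neg : ∀ {X : Matrix (ZMod 59) (ZMod 59) ℝ}, IsPM1 X → IsPM1 (-X) := by
      intro X hX i j
      rcases hX i j with h | h <;> simp [h]
    have qb := pr (pm pB)
    have qc := pr (pm pC)
    have qd := pr (pm pD)
    have qb' := pr (pm (v := b') fun i => pB (-i))
    have qc' := pr (pm (v := c') fun i => pC (-i))
    have qd' := pr (pm (v := d') fun i => pD (-i))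
    rintro ((i | i) | (i | i)) ((j | j) | (j | j))
    all_goals first
      | exact pm pA i j | exact qb i j | exact qc i j | exact qd i j
      | exact qb' i j | exact qc' i j | exact qd' i j
      | exact neg qb i j | exact neg qc i j | exact neg qd i j
      | exact neg qb' i j | exact neg qc' i j | exact neg qd' i j
  · apply block_mul
    all_goals
      simp only [R, a', b', c', d', transpose_mul, transpose_neg, transpose_circulant, R_symm,
        Matrix.mul_assoc, R_circ, R_circ', R_sq, R_sq', Matrix.mul_neg, Matrix.neg_mul, neg_neg,
        circ_comm_s19, circ_left_comm, Matrix.mul_one]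
    all_goals first
      | exact h
      | (rw [← h]; abel; done)
      | (rw [← h]; simp only [circ_comm_s19]; abel; done)
      | (abel; done)

/-- There exists a Hadamard matrix of order 236; in particular, for
any near Williamson matrices `A, B, C, D` of order 59, the Williamson array built
from `AR, B, C, D` is a `236 × 236` `(-1,1)`-matrix `W` with `WWᵀ = 236·I`. -/
theorem exists_hadamard_236 :
    (∀ A B C D : Matrix (ZMod 59) (ZMod 59) ℝ, IsNearWilliamson 59 A B C D →
      let E := A * Rmat 59
      let W := Matrix.fromBlocks
        (Matrix.fromBlocks E B (-B) E) (Matrix.fromBlocks C D D (-C))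
        (Matrix.fromBlocks (-C) (-D) (-D) C) (Matrix.fromBlocks E B (-B) E)
      (∀ i j, W i j = 1 ∨ W i j = -1) ∧ W * Wᵀ = (236 : ℝ) • 1) ∧
    ∃ H : Matrix (Fin 236) (Fin 236) ℝ,
      (∀ i j, H i j = 1 ∨ H i j = -1) ∧ H * Hᵀ = (236 : ℝ) • 1 := by
  refine ⟨part1, ?_⟩
  obtain ⟨W, hW, hWW⟩ := part2
  have hcard : Fintype.card ((ZMod 59 ⊕ ZMod 59) ⊕ (ZMod 59 ⊕ ZMod 59)) = 236 := by
    simp [ZMod.card]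
  let e := Fintype.equivFinOfCardEq hcard
  refine ⟨W.submatrix e.symm e.symm, fun i j => hW _ _, ?_⟩
  rw [transpose_submatrix, submatrix_mul_equiv, hWW]
  ext i j
  simp [Matrix.one_apply]
end
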